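/- arXiv:1211.6833 — 2 statements merged into one kernel-verified Lean document; each statement's English description precedes it below -/
import Mathlib

section
/- Let K be a field, A a commutative K-algebra, and M an A-module. Regard M as an A^{⊗3}-module via μ_3 and as an A^{⊗4}-module via μ_4; regard A as an A^{⊗3}-module via μ_3; regard A⊗A as an A^{⊗4}-module via the ring homomorphism A^{⊗4} → A^{⊗2} sending a⊗b⊗c⊗d to ab⊗cd. Then for every natural number n, the K-vector spaces Tor_n^{A^{⊗4}}(M, A⊗A) and Tor_n^{A^{⊗3}}(M, A) are isomorphic. -/
/-!
STATEMENT 0: Let `K` be a field, `A` a commutative `K`-algebra, and `M` an `A`-module.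
Regard `M` as an `A^{⊗3}`-module via `μ₃` and as an `A^{⊗4}`-module via `μ₄`; regard `A` as
an `A^{⊗3}`-module via `μ₃`; regard `A ⊗ A` as an `A^{⊗4}`-module via the ring homomorphism
`A^{⊗4} → A^{⊗2}`, `a ⊗ b ⊗ c ⊗ d ↦ ab ⊗ cd`.  Then for every `n : ℕ`, the `K`-vector spaces
`Tor_n^{A^{⊗4}}(M, A ⊗ A)` and `Tor_n^{A^{⊗3}}(M, A)` are isomorphic.
(We bracket `A^{⊗3} = (A ⊗ A) ⊗ A` and `A^{⊗4} = (A ⊗ A) ⊗ (A ⊗ A)`.)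
-/

open CategoryTheory
open scoped TensorProduct

noncomputable section

/-- The multiplication map `μ₂ : A ⊗ A → A`. -/
def mu2 (K : Type) [Field K] (A : Type) [CommRing A] [Algebra K A] :
    A ⊗[K] A →ₐ[K] A :=
  Algebra.TensorProduct.lmul' K

/-- The multiplication map `μ₃ : A^{⊗3} = (A ⊗ A) ⊗ A → A`, `a ⊗ b ⊗ c ↦ abc`. -/
def mu3 (K : Type) [Field K] (A : Type) [CommRing A] [Algebra K A] :
    (A ⊗[K] A) ⊗[K] A →ₐ[K] A :=
  (mu2 K A).comp (Algebra.TensorProduct.map (mu2 K A) (AlgHom.id K A))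

/-- The multiplication map `μ₄ : A^{⊗4} = (A ⊗ A) ⊗ (A ⊗ A) → A`, `a ⊗ b ⊗ c ⊗ d ↦ abcd`. -/
def mu4 (K : Type) [Field K] (A : Type) [CommRing A] [Algebra K A] :
    (A ⊗[K] A) ⊗[K] (A ⊗[K] A) →ₐ[K] A :=
  (mu2 K A).comp (Algebra.TensorProduct.map (mu2 K A) (mu2 K A))

/-- The map `ν : A^{⊗4} → A^{⊗2}`, `a ⊗ b ⊗ c ⊗ d ↦ ab ⊗ cd`. -/
def nu (K : Type) [Field K] (A : Type) [CommRing A] [Algebra K A] :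
    (A ⊗[K] A) ⊗[K] (A ⊗[K] A) →ₐ[K] A ⊗[K] A :=
  Algebra.TensorProduct.map (mu2 K A) (mu2 K A)

set_option linter.style.haveILetI false

section cat
universe v u
variable {C D E : Type*} [Category C] [Category D] [Category E] [Abelian C] [Abelian D] [Abelian E]

lemma quasiIso_of_exact (G : C ⥤ D) [G.Additive] [G.PreservesProjectiveObjects]
    [G.PreservesHomology] (F : D ⥤ E) [F.Additive] {N : C} (P : ProjectiveResolution N)
    [Projective (G.obj N)] :
    QuasiIso ((F.mapHomologicalComplex _).map ((G.mapHomologicalComplex _).map P.π)) := by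
  let Q := G.mapProjectiveResolution P
  let e := ProjectiveResolution.homotopyEquiv Q (ProjectiveResolution.self (G.obj N))
  have he : e.hom = Q.π := by
    have := ProjectiveResolution.homotopyEquiv_hom_π Q (ProjectiveResolution.self (G.obj N))
    exact (Category.comp_id _).symm.trans this
  have h1 : QuasiIso ((F.mapHomologicalComplex _).map Q.π) := by
    rw [← he]
    exact (F.mapHomotopyEquiv e).quasiIso_hom
  have h2 : QuasiIso ((F.mapHomologicalComplex _).map ((G.mapHomologicalComplex _).map P.π) ≫
    (F.mapHomologicalComplex _).map
      ((HomologicalComplex.singleMapHomologicalComplex G _ 0).hom.app N)) := by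
    rw [← Functor.map_comp]
    exact h1
  exact quasiIso_of_comp_right _ _ (hφφ' := h2)

/-- transport a projective resolution. -/
def resMap (F : C ⥤ D) [F.Additive] [F.PreservesProjectiveObjects] {N : C}
    (P : ProjectiveResolution N) (h : QuasiIso ((F.mapHomologicalComplex _).map P.π)) :
    ProjectiveResolution (F.obj N) where
  complex := (F.mapHomologicalComplex _).obj P.complex
  projective n := Functor.PreservesProjectiveObjects.projective_obj (P.projective n)
  π := (F.mapHomologicalComplex _).map P.π ≫
    (HomologicalComplex.singleMapHomologicalComplex _ _ _).hom.app _
  quasiIso := inferInstance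

/-- derived functors along exact functor -/
def derIso [HasProjectiveResolutions C] (H : C ⥤ D) [H.Additive] (U : D ⥤ E) [U.Additive]
    [U.PreservesHomology] {N : C}
    (P : ProjectiveResolution N) (n : ℕ) :
    U.obj ((H.leftDerived n).obj N) ≅
      (((H ⋙ U).mapHomologicalComplex _).obj P.complex).homology n :=
  U.mapIso (P.isoLeftDerivedObj H n) ≪≫
    ((((H.mapHomologicalComplex _).obj P.complex).sc n).mapHomologyIso U).symm

theorem derived_compare {C' : Type*} [Category C'] [Abelian C'] {D' : Type*} [Category D'] [Abelian D']
    [HasProjectiveResolutions C] [HasProjectiveResolutions C']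
    (H : C ⥤ D) [H.Additive] (U : D ⥤ E) [U.Additive] [U.PreservesHomology]
    (H' : C' ⥤ D') [H'.Additive] (U' : D' ⥤ E) [U'.Additive] [U'.PreservesHomology]
    (F : C ⥤ C') [F.Additive] [F.PreservesProjectiveObjects]
    (α : H ⋙ U ≅ F ⋙ H' ⋙ U') {N : C}  (P : ProjectiveResolution N)
    (h : QuasiIso ((F.mapHomologicalComplex _).map P.π)) (n : ℕ) :
    Nonempty (U.obj ((H.leftDerived n).obj N) ≅ U'.obj ((H'.leftDerived n).obj (F.obj N))) :=
  ⟨derIso H U P n ≪≫ (HomologicalComplex.homologyFunctor E _ n).mapIso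
    ((NatIso.mapHomologicalComplex α _).app P.complex) ≪≫
    (derIso H' U' (resMap F P h) n).symm⟩
end cat

section mod
variable (R S : Type) [CommRing R] [CommRing S] [Algebra R S]

/-- base change functor -/
def bc : ModuleCat.{0} R ⥤ ModuleCat.{0} S where
  obj X := ModuleCat.of S (S ⊗[R] X)
  map f := ModuleCat.ofHom (f.hom.baseChange S)
  map_id X := by ext : 1; simp
  map_comp f g := by ext : 1; simp [LinearMap.baseChange_comp]

instance : (bc R S).Additive where
  map_add {X Y f g} := by
    ext : 1
    exact LinearMap.baseChange_add _ _

instance : (bc R S).PreservesProjectiveObjects where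
  projective_obj {X} h := by
    have := (IsProjective.iff_projective (R := R) X).2 h
    have : Module.Projective S (S ⊗[R] X) := inferInstance
    exact (IsProjective.iff_projective (R := S) _).1 this

/-- restriction along a projective ring extension preserves projectives -/
lemma restr_proj {T R : Type} [CommRing T] [CommRing R] (f : T →+* R)
    (h : Module.Projective T ((ModuleCat.restrictScalars f).obj (ModuleCat.of R R))) :
    (ModuleCat.restrictScalars.{0} f).PreservesProjectiveObjects := by
  have : (ModuleCat.coextendScalars.{0} f).PreservesEpimorphisms := ⟨by
    intro X Y g hg
    rw [ModuleCat.epi_iff_surjective] at hg ⊢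
    intro y
    obtain ⟨x, hx⟩ := Module.projective_lifting_property g.hom (ModuleCat.CoextendScalars.equiv f Y y) hg
    exact ⟨(ModuleCat.CoextendScalars.equiv f X).symm x, hx⟩⟩
  exact ⟨fun hX => (ModuleCat.restrictCoextendScalarsAdj f).map_projective _ hX⟩

/-- iso from an additive equivalence -/
def isoOfAdd {R : Type} [CommRing R] {X Y : ModuleCat.{0} R} (e : X ≃+ Y)
    (h : ∀ (r : R) (x : X), e (r • x) = r • e x) : X ≅ Y :=
  LinearEquiv.toModuleIso { e with map_smul' := h }

lemma beck_nat (T R B S : Type) [CommRing T] [CommRing R] [CommRing B] [CommRing S]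
    [Algebra T R] [Algebra T B] [Algebra T S] [Algebra R S] [Algebra B S]
    [IsScalarTower T R S] [IsScalarTower T B S] [Algebra.IsPushout T B R S]
    (X Y : Type) [AddCommGroup X] [AddCommGroup Y] [Module R X] [Module R Y] [Module T X]
    [Module T Y] [IsScalarTower T R X] [IsScalarTower T R Y] (f : X →ₗ[R] Y) (x : B ⊗[T] X) :
    (Algebra.IsPushout.cancelBaseChange T B R S Y).symm
        ((f.restrictScalars T).baseChange B x) =
        f.baseChange S ((Algebra.IsPushout.cancelBaseChange T B R S X).symm x) := by
  induction x using TensorProduct.induction_on with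
  | zero => simp
  | add x y hx hy => simp only [map_add, hx, hy]
  | tmul b x => simp

lemma canc_nat (R S M X Y : Type) [CommRing R] [CommRing S] [Algebra R S] [AddCommGroup X]
    [AddCommGroup Y] [Module R X] [Module R Y] [AddCommGroup M] [Module S M] [Module R M]
    [IsScalarTower R S M] (f : X →ₗ[R] Y) (x : M ⊗[R] X) :
    (TensorProduct.AlgebraTensorModule.cancelBaseChange R S S M Y).symm
        (f.lTensor M x) = (f.baseChange S).lTensor M
          ((TensorProduct.AlgebraTensorModule.cancelBaseChange R S S M X).symm x) := by
  induction x using TensorProduct.induction_on with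
  | zero => simp
  | add x y hx hy => simp only [map_add, hx, hy]
  | tmul b x => simp

lemma canc_smul (K R S M X : Type) [CommRing K] [CommRing R] [CommRing S] [Algebra K R]
    [Algebra K S] [Algebra R S] [IsScalarTower K R S] [AddCommGroup X]
    [Module R X] [AddCommGroup M] [Module S M] [Module R M]
    [IsScalarTower R S M] (b : K) (x : M ⊗[R] X) :
    (TensorProduct.AlgebraTensorModule.cancelBaseChange R S S M X).symm
      (algebraMap K R b • x) = algebraMap K S b •
        (TensorProduct.AlgebraTensorModule.cancelBaseChange R S S M X).symm x := by
  rw [IsScalarTower.algebraMap_apply K R S, ← map_smul, algebraMap_smul S]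

/-- Beck-Chevalley -/
def beck (T R B S : Type) [CommRing T] [CommRing R] [CommRing B] [CommRing S]
    [Algebra T R] [Algebra T B] [Algebra T S] [Algebra R S] [Algebra B S]
    [IsScalarTower T R S] [IsScalarTower T B S] [Algebra.IsPushout T B R S] :
    ModuleCat.restrictScalars (algebraMap T R) ⋙ bc T B ≅
    bc R S ⋙ ModuleCat.restrictScalars (algebraMap B S) :=
  NatIso.ofComponents (fun X =>
    letI : Module T X := Module.compHom X (algebraMap T R)
    haveI : IsScalarTower T R X := IsScalarTower.of_compHom T R X
    isoOfAdd
      (X := (ModuleCat.restrictScalars (algebraMap T R) ⋙ bc T B).obj X)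
      (Y := (bc R S ⋙ ModuleCat.restrictScalars (algebraMap B S)).obj X)
      (Algebra.IsPushout.cancelBaseChange T B R S X).symm.toAddEquiv
      (fun b x => by
        refine ((Algebra.IsPushout.cancelBaseChange T B R S X).symm.map_smul b x).trans ?_
        exact (algebraMap_smul S b _).symm))
    (by
      intro X Y f
      letI : Module T X := Module.compHom X (algebraMap T R)
      haveI : IsScalarTower T R X := IsScalarTower.of_compHom T R X
      letI : Module T Y := Module.compHom Y (algebraMap T R)
      haveI : IsScalarTower T R Y := IsScalarTower.of_compHom T R Y
      ext x
      change (Algebra.IsPushout.cancelBaseChange T B R S Y).symm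
        ((f.hom.restrictScalars T).baseChange B x) =
        f.hom.baseChange S ((Algebra.IsPushout.cancelBaseChange T B R S X).symm x)
      exact (beck_nat T R B S X Y f.hom :) x)

/-- tensor cancel -/
def canc (K R S : Type) [CommRing K] [CommRing R] [CommRing S]
    [Algebra K R] [Algebra K S] [Algebra R S] [IsScalarTower K R S] (M : ModuleCat.{0} S) :
    (MonoidalCategory.tensoringLeft (ModuleCat R)).obj
      ((ModuleCat.restrictScalars (algebraMap R S)).obj M) ⋙
        ModuleCat.restrictScalars (algebraMap K R) ≅
    bc R S ⋙ (MonoidalCategory.tensoringLeft (ModuleCat S)).obj M ⋙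
        ModuleCat.restrictScalars (algebraMap K S) :=
  letI : Module R M := Module.compHom M (algebraMap R S)
  haveI : IsScalarTower R S M := IsScalarTower.of_compHom R S M
  NatIso.ofComponents (fun X =>
    isoOfAdd
      (X := ((MonoidalCategory.tensoringLeft (ModuleCat R)).obj
      ((ModuleCat.restrictScalars (algebraMap R S)).obj M) ⋙
        ModuleCat.restrictScalars (algebraMap K R)).obj X)
      (Y := (bc R S ⋙ (MonoidalCategory.tensoringLeft (ModuleCat S)).obj M ⋙
        ModuleCat.restrictScalars (algebraMap K S)).obj X)
      (TensorProduct.AlgebraTensorModule.cancelBaseChange R S S M X).symm.toAddEquiv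
      (fun b x => by
        exact (canc_smul K R S M X b :) x))
    (by
      intro X Y f
      ext x
      change (TensorProduct.AlgebraTensorModule.cancelBaseChange R S S M Y).symm
        (f.hom.lTensor M x) = (f.hom.baseChange S).lTensor M
          ((TensorProduct.AlgebraTensorModule.cancelBaseChange R S S M X).symm x)
      exact (canc_nat R S M X Y f.hom :) x)

theorem tor_compare (K T R B S : Type) [CommRing K] [CommRing T] [CommRing R] [CommRing B]
    [CommRing S] [Algebra K R] [Algebra K S]
    [Algebra T R] [Algebra T B] [Algebra T S] [Algebra R S] [Algebra B S] [IsScalarTower K R S]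
    [IsScalarTower T R S] [IsScalarTower T B S] [Algebra.IsPushout T B R S]
    (hR : Module.Projective T
      ((ModuleCat.restrictScalars (algebraMap T R)).obj (ModuleCat.of R R)))
    (M : ModuleCat.{0} S) (N : ModuleCat.{0} R)
    (hN : Projective ((ModuleCat.restrictScalars (algebraMap T R)).obj N)) (n : ℕ) :
    Nonempty ((ModuleCat.restrictScalars (algebraMap K R)).obj
      (((Tor (ModuleCat R) n).obj ((ModuleCat.restrictScalars (algebraMap R S)).obj M)).obj N) ≅
      (ModuleCat.restrictScalars (algebraMap K S)).obj
      (((Tor (ModuleCat S) n).obj M).obj ((bc R S).obj N))) := by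
  have := restr_proj _ hR
  let P := projectiveResolution N
  have h1 := quasiIso_of_exact (ModuleCat.restrictScalars (algebraMap T R)) (bc T B) P
  have h2 : QuasiIso (((ModuleCat.restrictScalars (algebraMap B S)).mapHomologicalComplex _).map
      (((bc R S).mapHomologicalComplex _).map P.π)) := by
    let e := NatIso.mapHomologicalComplex (beck T R B S) (ComplexShape.down ℕ)
    exact quasiIso_of_arrow_mk_iso _ _
      (Arrow.isoMk (e.app _) (e.app _) (e.hom.naturality P.π).symm) (hφ := h1)
  rw [HomologicalComplex.quasiIso_map_iff_of_preservesHomology] at h2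
  exact derived_compare _ _ _ _ (bc R S) (canc K R S M) P h2 n

theorem tor_compare' (K T R B S : Type) [CommRing K] [CommRing T] [CommRing R] [CommRing B]
    [CommRing S] [Algebra K R] [Algebra K S] [Algebra R S] [IsScalarTower K R S]
    (f : T →+* R) (g : T →+* B) (k : B →+* S)
    (h : IsPushout (CommRingCat.ofHom f) (CommRingCat.ofHom g)
      (CommRingCat.ofHom (algebraMap R S)) (CommRingCat.ofHom k))
    (hR : Module.Projective T
      ((ModuleCat.restrictScalars f).obj (ModuleCat.of R R)))
    (M : ModuleCat.{0} S) (N : ModuleCat.{0} R)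
    (hN : Projective ((ModuleCat.restrictScalars f).obj N)) (n : ℕ) :
    Nonempty ((ModuleCat.restrictScalars (algebraMap K R)).obj
      (((Tor (ModuleCat R) n).obj ((ModuleCat.restrictScalars (algebraMap R S)).obj M)).obj N) ≅
      (ModuleCat.restrictScalars (algebraMap K S)).obj
      (((Tor (ModuleCat S) n).obj M).obj ((bc R S).obj N))) := by
  letI := f.toAlgebra
  letI := g.toAlgebra
  letI := k.toAlgebra
  letI := ((algebraMap R S).comp f).toAlgebra
  haveI : IsScalarTower T R S := IsScalarTower.of_algebraMap_eq' rfl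
  haveI : IsScalarTower T B S := IsScalarTower.of_algebraMap_eq' (by
    have := congr(($h.w).hom)
    exact this)
  haveI : Algebra.IsPushout T B R S := CommRingCat.isPushout_iff_isPushout.1 h.flip
  exact tor_compare K T R B S hR M N hN n
end mod

section app
variable (K : Type) [Field K] (A : Type) [CommRing A] [Algebra K A]

/-- The map `b ↦ 1 ⊗ b ⊗ 1`. -/
def kap : A →ₐ[K] (A ⊗[K] A) ⊗[K] A :=
  Algebra.TensorProduct.includeLeft.comp Algebra.TensorProduct.includeRight

/-- The map `1 ⊗ μ ⊗ 1`. -/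
def phi : (A ⊗[K] A) ⊗[K] (A ⊗[K] A) →ₐ[K] (A ⊗[K] A) ⊗[K] A :=
  Algebra.TensorProduct.productMap Algebra.TensorProduct.includeLeft
    (Algebra.TensorProduct.productMap (kap K A) Algebra.TensorProduct.includeRight)

lemma kap_apply (b : A) : kap K A b = (1 ⊗ₜ b) ⊗ₜ 1 := rfl

lemma phi_tmul (a b c d : A) : phi K A ((a ⊗ₜ b) ⊗ₜ (c ⊗ₜ d)) = (a ⊗ₜ (b * c)) ⊗ₜ d := by
  simp [phi, kap_apply]

/-- A section of `phi`. -/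
def sig : (A ⊗[K] A) ⊗[K] A →ₐ[K] (A ⊗[K] A) ⊗[K] (A ⊗[K] A) :=
  Algebra.TensorProduct.map (AlgHom.id K _) Algebra.TensorProduct.includeRight

lemma sig_tmul (a b c : A) : sig K A ((a ⊗ₜ b) ⊗ₜ c) = (a ⊗ₜ b) ⊗ₜ (1 ⊗ₜ c) := by
  simp [sig]

/-- Inclusion of the two middle factors. -/
def mid : A ⊗[K] A →ₐ[K] (A ⊗[K] A) ⊗[K] (A ⊗[K] A) :=
  Algebra.TensorProduct.map Algebra.TensorProduct.includeRight Algebra.TensorProduct.includeLeft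

lemma mid_tmul (b c : A) : mid K A (b ⊗ₜ c) = (1 ⊗ₜ b) ⊗ₜ (c ⊗ₜ 1) := by
  simp [mid]

lemma phi_sig : (phi K A).comp (sig K A) = AlgHom.id K _ := by
  ext a <;> simp [sig_tmul, phi_tmul, Algebra.TensorProduct.one_def]

lemma phi_mid : (phi K A).comp (mid K A) = (kap K A).comp (mu2 K A) := by
  apply Algebra.TensorProduct.ext'
  intro a b
  simp [mid_tmul, phi_tmul, kap_apply, mu2]

lemma nu_mid : (nu K A).comp (mid K A) = AlgHom.id K _ := by
  apply Algebra.TensorProduct.ext'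
  intro a b
  simp [mid_tmul, nu, mu2]

lemma mu4_eq : mu4 K A = (mu3 K A).comp (phi K A) := by
  ext a <;> simp [mu4, mu3, mu2, phi, kap_apply]

lemma sig_kap (b : A) : sig K A (kap K A b) = mid K A (b ⊗ₜ 1) := by
  simp [kap_apply, sig_tmul, mid_tmul]

lemma isPushout_phi : IsPushout (CommRingCat.ofHom (mid K A).toRingHom)
    (CommRingCat.ofHom (mu2 K A).toRingHom)
    (CommRingCat.ofHom (phi K A).toRingHom) (CommRingCat.ofHom (kap K A).toRingHom) where
  w := by
    refine CommRingCat.hom_ext (RingHom.ext fun x => ?_)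
    exact DFunLike.congr_fun (phi_mid K A) x
  isColimit' := ⟨Limits.PushoutCocone.IsColimit.mk _
    (fun s => CommRingCat.ofHom (sig K A).toRingHom ≫ s.inl)
    (fun s => by
      have hw : ∀ t, s.inl.hom (mid K A t) = s.inr.hom (mu2 K A t) := fun t =>
        congr(($s.condition).hom t)
      refine CommRingCat.hom_ext (RingHom.ext fun x => ?_)
      change s.inl.hom (sig K A (phi K A x)) = s.inl.hom x
      induction x using TensorProduct.induction_on with
      | zero => simp
      | add x y hx hy => simp only [map_add, hx, hy]
      | tmul u v =>
        induction u using TensorProduct.induction_on with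
        | zero => simp
        | add x y hx hy => simp only [TensorProduct.add_tmul, map_add, hx, hy]
        | tmul a b =>
          induction v using TensorProduct.induction_on with
          | zero => simp
          | add x y hx hy => simp only [TensorProduct.tmul_add, map_add, hx, hy]
          | tmul c d =>
            have e1 : (a ⊗ₜ b) ⊗ₜ (c ⊗ₜ d) =
              ((a ⊗ₜ 1) ⊗ₜ (1 ⊗ₜ d) : (A ⊗[K] A) ⊗[K] (A ⊗[K] A)) * mid K A (b ⊗ₜ c) := by
              simp [mid_tmul]
            have e2 : (a ⊗ₜ (b * c)) ⊗ₜ (1 ⊗ₜ d) =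
              ((a ⊗ₜ 1) ⊗ₜ (1 ⊗ₜ d) : (A ⊗[K] A) ⊗[K] (A ⊗[K] A)) *
                mid K A ((b * c) ⊗ₜ 1) := by
              simp [mid_tmul]
            rw [phi_tmul, sig_tmul, e1, e2, map_mul, map_mul, hw, hw]
            simp [mu2])
    (fun s => by
      have hw : ∀ t, s.inl.hom (mid K A t) = s.inr.hom (mu2 K A t) := fun t =>
        congr(($s.condition).hom t)
      refine CommRingCat.hom_ext (RingHom.ext fun b => ?_)
      change s.inl.hom (sig K A (kap K A b)) = s.inr.hom b
      rw [sig_kap, hw]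
      simp [mu2])
    (fun s m h1 h2 => by
      refine CommRingCat.hom_ext (RingHom.ext fun x => ?_)
      have h3 := DFunLike.congr_fun (phi_sig K A) x
      change m.hom x = s.inl.hom (sig K A x)
      rw [← h1]
      change m.hom x = m.hom (phi K A (sig K A x))
      exact congrArg m.hom h3.symm)⟩

/-- The shuffle `(a₂ ⊗ a₃) ⊗ (a₁ ⊗ a₄) ↦ (a₁ ⊗ a₂) ⊗ (a₃ ⊗ a₄)`. -/
def shuf : (A ⊗[K] A) ⊗[K] (A ⊗[K] A) ≃ₐ[K] (A ⊗[K] A) ⊗[K] (A ⊗[K] A) :=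
  (Algebra.TensorProduct.tensorTensorTensorComm K K K K A A A A).trans
    (Algebra.TensorProduct.congr (Algebra.TensorProduct.comm K A A) AlgEquiv.refl)

lemma shuf_left (t : A ⊗[K] A) : shuf K A (t ⊗ₜ 1) = mid K A t := by
  induction t using TensorProduct.induction_on with
  | zero => simp
  | add x y hx hy => simp only [TensorProduct.add_tmul, map_add, hx, hy]
  | tmul b c => simp [shuf, mid_tmul, Algebra.TensorProduct.one_def]

lemma proj_mid : Module.Projective (A ⊗[K] A) ((ModuleCat.restrictScalars (mid K A).toRingHom).obj
    (ModuleCat.of ((A ⊗[K] A) ⊗[K] (A ⊗[K] A)) ((A ⊗[K] A) ⊗[K] (A ⊗[K] A)))) := by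
  let e : (A ⊗[K] A) ⊗[K] (A ⊗[K] A) ≃ₗ[A ⊗[K] A]
    ((ModuleCat.restrictScalars (mid K A).toRingHom).obj
    (ModuleCat.of ((A ⊗[K] A) ⊗[K] (A ⊗[K] A)) ((A ⊗[K] A) ⊗[K] (A ⊗[K] A)))) :=
    { (shuf K A).toAddEquiv with
      map_smul' := fun t x => by
        have h : t • x = (t ⊗ₜ 1) * x := by
          induction x using TensorProduct.induction_on with
          | zero => simp
          | add x y hx hy => rw [smul_add, mul_add, hx, hy]
          | tmul x y => simp [TensorProduct.smul_tmul']
        change shuf K A (t • x) = mid K A t * shuf K A x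
        rw [h, map_mul, shuf_left] }
  exact Module.Projective.of_equiv e

lemma proj_N : Projective ((ModuleCat.restrictScalars (mid K A).toRingHom).obj
    ((ModuleCat.restrictScalars (nu K A).toRingHom).obj
              (ModuleCat.of (A ⊗[K] A) (A ⊗[K] A)))) := by
  let e : ModuleCat.of (A ⊗[K] A) (A ⊗[K] A) ≅
    ((ModuleCat.restrictScalars (mid K A).toRingHom).obj
    ((ModuleCat.restrictScalars (nu K A).toRingHom).obj
              (ModuleCat.of (A ⊗[K] A) (A ⊗[K] A)))) :=
    isoOfAdd (AddEquiv.refl _) (fun t x => by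
      change t * (show A ⊗[K] A from x) = nu K A (mid K A t) * (show A ⊗[K] A from x)
      have := DFunLike.congr_fun (nu_mid K A) t
      exact congrArg (· * (show A ⊗[K] A from x)) this.symm)
  have : Projective (ModuleCat.of (A ⊗[K] A) (A ⊗[K] A)) :=
    (IsProjective.iff_projective (A ⊗[K] A)).1 inferInstance
  exact Projective.of_iso e this

end app

section app2

lemma bc_iso_gen (R S N L : Type) [CommRing R] [CommRing S] [Algebra R S] [AddCommGroup N]
    [Module R N] [AddCommGroup L] [Module S L] [Module R L] [IsScalarTower R S L]
    (l : N →ₗ[R] L) (s : L → N) (hl : ∀ a, l (s a) = a)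
    (hs : Function.Surjective (algebraMap R S))
    (h : ∀ x, (1 : S) ⊗ₜ[R] s (l x) = 1 ⊗ₜ x) : Nonempty (S ⊗[R] N ≃ₗ[S] L) := by
  refine ⟨LinearEquiv.ofBijective (l.liftBaseChange S) ⟨?_, fun a => ⟨1 ⊗ₜ s a, by simp [hl]⟩⟩⟩
  intro z w hzw
  obtain ⟨x, rfl⟩ := TensorProduct.mk_surjective R N S hs z
  obtain ⟨y, rfl⟩ := TensorProduct.mk_surjective R N S hs w
  have : l x = l y := by simpa using hzw
  change (1 : S) ⊗ₜ[R] x = 1 ⊗ₜ y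
  rw [← h x, this, h y]

lemma bc_gen (R S T' L : Type) [CommRing R] [CommRing S] [Algebra R S] [CommRing T'] [CommRing L]
    (ν : R →+* T') (μ : S →+* L) (m : T' →+* L) (hm : ∀ r, m (ν r) = μ (algebraMap R S r))
    (s : L → T') (hms : ∀ a, m (s a) = a) (hs : Function.Surjective (algebraMap R S))
    (hk : ∀ x : T', ∃ r, algebraMap R S r = 0 ∧ ν r = s (m x) - x) :
    Nonempty ((bc R S).obj ((ModuleCat.restrictScalars ν).obj (ModuleCat.of T' T')) ≅
      (ModuleCat.restrictScalars μ).obj (ModuleCat.of L L)) := by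
  let _ : Module S L := Module.compHom L μ
  let _ : Module R L := Module.compHom L (μ.comp (algebraMap R S))
  have : IsScalarTower R S L := IsScalarTower.of_algebraMap_smul fun r x => rfl
  let _ : Module R T' := Module.compHom T' ν
  let l : T' →ₗ[R] L :=
    { m.toAddMonoidHom with
      map_smul' := fun r x => by
        change m (ν r * x) = μ (algebraMap R S r) * m x
        rw [map_mul, hm] }
  obtain ⟨e⟩ := bc_iso_gen R S T' L l s hms hs (fun x => by
    change (1 : S) ⊗ₜ[R] s (m x) = 1 ⊗ₜ x
    obtain ⟨r, h0, h1⟩ := hk x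
    rw [← sub_eq_zero, ← TensorProduct.tmul_sub, ← h1]
    have h2 : ν r = r • (1 : T') := (mul_one (ν r)).symm
    rw [h2, ← TensorProduct.smul_tmul, Algebra.smul_def, h0, zero_mul, TensorProduct.zero_tmul])
  exact ⟨e.toModuleIso⟩

variable (K : Type) [Field K] (A : Type) [CommRing A] [Algebra K A]

lemma bc_N :
    letI : Algebra ((A ⊗[K] A) ⊗[K] (A ⊗[K] A)) ((A ⊗[K] A) ⊗[K] A) := (phi K A).toRingHom.toAlgebra
    Nonempty ((bc ((A ⊗[K] A) ⊗[K] (A ⊗[K] A)) ((A ⊗[K] A) ⊗[K] A)).obj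
      ((ModuleCat.restrictScalars (nu K A).toRingHom).obj (ModuleCat.of (A ⊗[K] A) (A ⊗[K] A))) ≅
      (ModuleCat.restrictScalars (mu3 K A).toRingHom).obj (ModuleCat.of A A)) := by
  let _ : Algebra ((A ⊗[K] A) ⊗[K] (A ⊗[K] A)) ((A ⊗[K] A) ⊗[K] A) := (phi K A).toRingHom.toAlgebra
  have hk : ∀ x : A ⊗[K] A, ∃ r, phi K A r = 0 ∧ nu K A r = (mu2 K A x) ⊗ₜ 1 - x := by
    intro x
    induction x using TensorProduct.induction_on with
    | zero => exact ⟨0, by simp⟩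
    | add x y hx hy =>
      obtain ⟨r, h1, h2⟩ := hx
      obtain ⟨r', h1', h2'⟩ := hy
      refine ⟨r + r', by rw [map_add, h1, h1', add_zero], ?_⟩
      rw [map_add, map_add, h2, h2', TensorProduct.add_tmul]
      abel
    | tmul x y =>
      refine ⟨(x ⊗ₜ y) ⊗ₜ (1 ⊗ₜ 1) - (x ⊗ₜ 1) ⊗ₜ (y ⊗ₜ 1), ?_, ?_⟩
      · rw [map_sub, phi_tmul, phi_tmul, one_mul, mul_one, sub_self]
      · simp [nu, mu2]
  exact bc_gen _ _ _ _ (nu K A).toRingHom (mu3 K A).toRingHom (mu2 K A).toRingHom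
    (fun r => DFunLike.congr_fun (mu4_eq K A) r) (fun a => a ⊗ₜ 1)
    (fun a => by change mu2 K A _ = _; simp [mu2])
    (fun x => ⟨sig K A x, DFunLike.congr_fun (phi_sig K A) x⟩) hk

end app2

theorem statement0 (K : Type) [Field K] (A : Type) [CommRing A] [Algebra K A]
    (M : Type) [AddCommGroup M] [Module A M] (n : ℕ) :
    Nonempty
      ((ModuleCat.restrictScalars (algebraMap K ((A ⊗[K] A) ⊗[K] (A ⊗[K] A)))).obj
          (((Tor (ModuleCat ((A ⊗[K] A) ⊗[K] (A ⊗[K] A))) n).obj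
              ((ModuleCat.restrictScalars (mu4 K A).toRingHom).obj (ModuleCat.of A M))).obj
            ((ModuleCat.restrictScalars (nu K A).toRingHom).obj
              (ModuleCat.of (A ⊗[K] A) (A ⊗[K] A)))) ≅
        (ModuleCat.restrictScalars (algebraMap K ((A ⊗[K] A) ⊗[K] A))).obj
          (((Tor (ModuleCat ((A ⊗[K] A) ⊗[K] A)) n).obj
              ((ModuleCat.restrictScalars (mu3 K A).toRingHom).obj (ModuleCat.of A M))).obj
            ((ModuleCat.restrictScalars (mu3 K A).toRingHom).obj (ModuleCat.of A A)))) := by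
  let _ : Algebra ((A ⊗[K] A) ⊗[K] (A ⊗[K] A)) ((A ⊗[K] A) ⊗[K] A) := (phi K A).toRingHom.toAlgebra
  have : IsScalarTower K ((A ⊗[K] A) ⊗[K] (A ⊗[K] A)) ((A ⊗[K] A) ⊗[K] A) :=
    IsScalarTower.of_algebraMap_eq' (phi K A).comp_algebraMap.symm
  obtain ⟨e⟩ := tor_compare' K (A ⊗[K] A) ((A ⊗[K] A) ⊗[K] (A ⊗[K] A)) A ((A ⊗[K] A) ⊗[K] A)
    (mid K A).toRingHom (mu2 K A).toRingHom (kap K A).toRingHom (isPushout_phi K A) (proj_mid K A)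
    ((ModuleCat.restrictScalars (mu3 K A).toRingHom).obj (ModuleCat.of A M)) _ (proj_N K A) n
  obtain ⟨e'⟩ := bc_N K A
  have h4 : (mu4 K A).toRingHom = (mu3 K A).toRingHom.comp
      (algebraMap ((A ⊗[K] A) ⊗[K] (A ⊗[K] A)) ((A ⊗[K] A) ⊗[K] A)) :=
    congrArg AlgHom.toRingHom (mu4_eq K A)
  let i := ModuleCat.restrictScalarsComp'App _ _ _ h4 (ModuleCat.of A M)
  exact ⟨(ModuleCat.restrictScalars _).mapIso (((Tor _ n).mapIso i).app _) ≪≫ e ≪≫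
    (ModuleCat.restrictScalars _).mapIso (((Tor _ n).obj _).mapIso e')⟩
end
end

section
/- Let K be a field and A an ℕ-graded, graded-commutative K-algebra (ab = (−1)^{|a||b|} ba for homogeneous a, b) such that A_0 = K·1 is one-dimensional. Let A ⊗̂ A denote the graded tensor product of A with itself with Koszul signs, i.e. the ℕ-graded algebra with (A ⊗̂ A)_n = ⊕_{p+q=n} A_p ⊗_K A_q and multiplication (a⊗b)(a'⊗b') = (−1)^{|b||a'|} aa' ⊗ bb' on homogeneous elements, and regard A as a graded (A ⊗̂ A)-module via the algebra homomorphism A ⊗̂ A → A, a⊗b ↦ ab. Let d ≤ 0 be an integer and let h : A → A ⊗̂ A be an (A ⊗̂ A)-linear map of degree d, meaning h(A_n) ⊆ (A ⊗̂ A)_{n+d} for all n (with (A ⊗̂ A)_m = 0 for m < 0) and h(r·x) = (−1)^{d|r|} r·h(x) for homogeneous r ∈ A ⊗̂ A and x ∈ A. If d = 0, assume in addition that A_n ≠ 0 for some n > 0. Then h = 0. -/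
/-!
STATEMENT 4: Let `A` be an ℕ-graded (i.e. `ℤ`-graded with trivial negative components),
graded-commutative, associative, unital `K`-algebra with `A_0 = K·1` one-dimensional.  Let
`A ⊗̂ A` be the graded tensor square with Koszul-signed multiplication
`(a ⊗ b)(a' ⊗ b') = (-1)^{|b||a'|} aa' ⊗ bb'`, and regard `A` as an `(A ⊗̂ A)`-module via
`a ⊗ b ↦ ab`.  Let `d ≤ 0` and let `h : A → A ⊗̂ A` be an `(A ⊗̂ A)`-linear map of degree `d`,
i.e. `h (r · x) = (-1)^{d |r|} r · h x` for homogeneous `r`.  If `d = 0`, assume in addition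
that `A_n ≠ 0` for some `n > 0`.  Then `h = 0`.
-/

open scoped TensorProduct DirectSum

noncomputable section

/-- Cast along an equality of degrees. -/
def gcast (K : Type) [Field K] (A : ℤ → Type) [∀ n, AddCommGroup (A n)] [∀ n, Module K (A n)]
    {m n : ℤ} (h : m = n) : A m →ₗ[K] A n := by subst h; exact LinearMap.id

/-- The indexing set of the degree-`n` component of the tensor product of graded vector
spaces: pairs of degrees summing to `n`. -/
abbrev gtIdx (n : ℤ) : Type := {x : ℤ × ℤ // x.1 + x.2 = n}

/-- The degree-`n` component `⊕_{p+q=n} A_p ⊗ A_q` of the graded tensor square `A ⊗̂ A`. -/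
abbrev gt (K : Type) [Field K] (A : ℤ → Type)
    [∀ n, AddCommGroup (A n)] [∀ n, Module K (A n)] (n : ℤ) : Type :=
  ⨁ pq : gtIdx n, A pq.1.1 ⊗[K] A pq.1.2

/-- The multiplication of the graded algebra `A ⊗̂ A` (with Koszul signs):
`(a ⊗ b)(a' ⊗ b') = (-1)^{|b||a'|} (a a') ⊗ (b b')`. -/
def gtMul (K : Type) [Field K] (A : ℤ → Type)
    [∀ n, AddCommGroup (A n)] [∀ n, Module K (A n)]
    (mul : ∀ p q : ℤ, A p →ₗ[K] A q →ₗ[K] A (p + q)) (m n : ℤ) :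
    gt K A m →ₗ[K] gt K A n →ₗ[K] gt K A (m + n) :=
  DirectSum.toModule K _ _ fun pq =>
    (DirectSum.toModule K _ _ fun rs =>
      (TensorProduct.curry
        (DirectSum.lof K (gtIdx (m + n)) (fun ij => A ij.1.1 ⊗[K] A ij.1.2)
            ⟨(pq.1.1 + rs.1.1, pq.1.2 + rs.1.2), by
              have h1 := pq.2; have h2 := rs.2; dsimp at h1 h2 ⊢; omega⟩ ∘ₗ
          (((-1 : K) ^ (pq.1.2 * rs.1.1)) •
            TensorProduct.map (TensorProduct.lift (mul pq.1.1 rs.1.1))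
              (TensorProduct.lift (mul pq.1.2 rs.1.2))) ∘ₗ
          (TensorProduct.tensorTensorTensorComm K (A pq.1.1) (A pq.1.2) (A rs.1.1)
            (A rs.1.2)).toLinearMap)).flip).flip

/-- The action of `A ⊗̂ A` on `A` via the multiplication morphism `a ⊗ b ↦ ab`:
`(a ⊗ b) · x = a b x`. -/
def gtAct (K : Type) [Field K] (A : ℤ → Type)
    [∀ n, AddCommGroup (A n)] [∀ n, Module K (A n)]
    (mul : ∀ p q : ℤ, A p →ₗ[K] A q →ₗ[K] A (p + q)) (m n : ℤ) :
    gt K A m →ₗ[K] A n →ₗ[K] A (m + n) :=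
  DirectSum.toModule K _ _ fun pq =>
    TensorProduct.lift
      (((mul pq.1.1 pq.1.2).compr₂ (mul (pq.1.1 + pq.1.2) n)).compr₂
        (LinearMap.llcomp K (A n) (A (pq.1.1 + pq.1.2 + n)) (A (m + n))
          (gcast K A (by have := pq.2; omega))))

theorem gcast_gcast_apply (K : Type) [Field K] (A : ℤ → Type) [∀ n, AddCommGroup (A n)]
    [∀ n, Module K (A n)] {m n k : ℤ} (e : m = n) (f : n = k) (x : A m) :
    gcast K A f (gcast K A e x) = gcast K A (e.trans f) x := by
  subst e; subst f; rfl

theorem gcast_inj (K : Type) [Field K] (A : ℤ → Type) [∀ n, AddCommGroup (A n)]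
    [∀ n, Module K (A n)] {m n : ℤ} (e : m = n) : Function.Injective (gcast K A e) := by
  subst e; exact fun _ _ h => h

theorem gtAct_lof (K : Type) [Field K] (A : ℤ → Type)
    [∀ n, AddCommGroup (A n)] [∀ n, Module K (A n)]
    (mul : ∀ p q : ℤ, A p →ₗ[K] A q →ₗ[K] A (p + q)) (m n : ℤ) (pq : gtIdx m)
    (a : A pq.1.1) (b : A pq.1.2) (x : A n) :
    gtAct K A mul m n
      (DirectSum.lof K (gtIdx m) (fun ij => A ij.1.1 ⊗[K] A ij.1.2) pq (a ⊗ₜ b)) x =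
    gcast K A (by have := pq.2; omega)
      (mul (pq.1.1 + pq.1.2) n (mul pq.1.1 pq.1.2 a b) x) := by
  unfold gtAct
  rw [DirectSum.toModule_lof]
  rfl

theorem gtMul_lof (K : Type) [Field K] (A : ℤ → Type)
    [∀ n, AddCommGroup (A n)] [∀ n, Module K (A n)]
    (mul : ∀ p q : ℤ, A p →ₗ[K] A q →ₗ[K] A (p + q)) (m n : ℤ) (pq : gtIdx m) (rs : gtIdx n)
    (a : A pq.1.1) (b : A pq.1.2) (a' : A rs.1.1) (b' : A rs.1.2) :
    gtMul K A mul m n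
      (DirectSum.lof K (gtIdx m) (fun ij => A ij.1.1 ⊗[K] A ij.1.2) pq (a ⊗ₜ b))
      (DirectSum.lof K (gtIdx n) (fun ij => A ij.1.1 ⊗[K] A ij.1.2) rs (a' ⊗ₜ b')) =
    DirectSum.lof K (gtIdx (m + n)) (fun ij => A ij.1.1 ⊗[K] A ij.1.2)
      ⟨(pq.1.1 + rs.1.1, pq.1.2 + rs.1.2), by
        have h1 := pq.2; have h2 := rs.2; dsimp at h1 h2 ⊢; omega⟩
      (((-1 : K) ^ (pq.1.2 * rs.1.1)) •
        (mul pq.1.1 rs.1.1 a a' ⊗ₜ mul pq.1.2 rs.1.2 b b')) := by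
  unfold gtMul
  rw [DirectSum.toModule_lof, LinearMap.flip_apply, DirectSum.toModule_lof]
  rfl

theorem tensor_zero_of (K : Type) [Field K] (A : ℤ → Type)
    [∀ n, AddCommGroup (A n)] [∀ n, Module K (A n)]
    (hneg : ∀ n : ℤ, n < 0 → Subsingleton (A n)) (p q : ℤ) (hpq : p < 0 ∨ q < 0)
    (t : A p ⊗[K] A q) : t = 0 := by
  induction t using TensorProduct.induction_on with
  | zero => rfl
  | tmul a b =>
    rcases hpq with hp | hq
    · have := hneg p hp
      rw [Subsingleton.elim a 0, TensorProduct.zero_tmul]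
    · have := hneg q hq
      rw [Subsingleton.elim b 0, TensorProduct.tmul_zero]
  | add a b ha hb => rw [ha, hb, add_zero]

theorem gt_neg (K : Type) [Field K] (A : ℤ → Type)
    [∀ n, AddCommGroup (A n)] [∀ n, Module K (A n)]
    (hneg : ∀ n : ℤ, n < 0 → Subsingleton (A n)) (k : ℤ) (hk : k < 0) (z : gt K A k) :
    z = 0 := by
  refine DFinsupp.ext fun pq => ?_
  refine tensor_zero_of K A hneg _ _ ?_ _
  have := pq.2
  omega

theorem gt_zero (K : Type) [Field K] (A : ℤ → Type)
    [∀ n, AddCommGroup (A n)] [∀ n, Module K (A n)]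
    (hneg : ∀ n : ℤ, n < 0 → Subsingleton (A n)) (one : A 0)
    (hdim : Function.Bijective fun c : K => c • one) (k : ℤ) (hk : k = 0) (z : gt K A k) :
    ∃ c : K, z = c • DirectSum.lof K (gtIdx k) (fun ij => A ij.1.1 ⊗[K] A ij.1.2)
      ⟨(0, 0), by simp [hk]⟩ (one ⊗ₜ one) := by
  have key : ∀ t : A 0 ⊗[K] A 0, ∃ c : K, t = c • (one ⊗ₜ[K] one) := by
    intro t
    induction t using TensorProduct.induction_on with
    | zero => exact ⟨0, by simp⟩
    | tmul a b =>
      obtain ⟨u, rfl⟩ := hdim.2 a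
      obtain ⟨v, rfl⟩ := hdim.2 b
      exact ⟨u * v, TensorProduct.smul_tmul_smul u v one one⟩
    | add a b ha hb =>
      obtain ⟨u, rfl⟩ := ha
      obtain ⟨v, rfl⟩ := hb
      exact ⟨u + v, by rw [add_smul]⟩
  obtain ⟨c, hc⟩ := key (z ⟨(0, 0), by simp [hk]⟩)
  refine ⟨c, ?_⟩
  rw [← map_smul, ← hc]
  refine DFinsupp.ext fun pq => ?_
  by_cases hpq : pq = ⟨(0, 0), by simp [hk]⟩
  · subst hpq
    exact (DirectSum.lof_apply (M := fun ij : gtIdx k => A ij.1.1 ⊗[K] A ij.1.2) K _ _).symm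
  · refine (tensor_zero_of K A hneg _ _ ?_ _).trans (tensor_zero_of K A hneg _ _ ?_ _).symm <;>
    · have h2 := pq.2
      by_contra hcon
      apply hpq
      ext <;> dsimp only <;> omega

theorem tmul_zero_cases (K : Type) [Field K] {V W : Type} [AddCommGroup V] [AddCommGroup W]
    [Module K V] [Module K W] (v : V) (w : W) (h : v ⊗ₜ[K] w = 0) : v = 0 ∨ w = 0 := by
  by_contra! hcon
  obtain ⟨hv, hw⟩ := hcon
  rw [Ne, ← Module.forall_dual_apply_eq_zero_iff K] at hv hw
  push Not at hv hw
  obtain ⟨f, hf⟩ := hv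
  obtain ⟨g, hg⟩ := hw
  have := congrArg (TensorProduct.lift ((LinearMap.mul K K).compl₁₂ f g)) h
  simp at this
  exact this.elim hf hg

theorem statement4 (K : Type) [Field K] (A : ℤ → Type)
    [∀ n, AddCommGroup (A n)] [∀ n, Module K (A n)]
    -- `A` is ℕ-graded:
    (hneg : ∀ n : ℤ, n < 0 → Subsingleton (A n))
    -- `A` is a graded-commutative, associative, unital `K`-algebra:
    (mul : ∀ p q : ℤ, A p →ₗ[K] A q →ₗ[K] A (p + q))
    (one : A 0)
    (hone_mul : ∀ (p : ℤ) (a : A p), mul 0 p one a = gcast K A (by omega) a)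
    (hmul_one : ∀ (p : ℤ) (a : A p), mul p 0 a one = gcast K A (by omega) a)
    (hassoc : ∀ (p q r : ℤ) (a : A p) (b : A q) (c : A r),
      mul (p + q) r (mul p q a b) c = gcast K A (by omega) (mul p (q + r) a (mul q r b c)))
    (hcomm : ∀ (p q : ℤ) (a : A p) (b : A q),
      mul p q a b = ((-1 : K) ^ (p * q)) • gcast K A (by omega) (mul q p b a))
    -- `A_0 = K · 1` is one-dimensional:
    (hdim : Function.Bijective fun c : K => c • one)
    -- `h : A → A ⊗̂ A` is an `(A ⊗̂ A)`-linear map of degree `d ≤ 0`: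
    (d : ℤ) (hd : d ≤ 0)
    (h : ∀ n : ℤ, A n →ₗ[K] gt K A (n + d))
    (hlin : ∀ (m n : ℤ) (r : gt K A m) (x : A n),
      h (m + n) (gtAct K A mul m n r x) =
        ((-1 : K) ^ (d * m)) •
          gcast K (gt K A) (by omega : m + (n + d) = m + n + d)
            (gtMul K A mul m (n + d) r (h n x)))
    -- if `d = 0`, `A_n ≠ 0` for some `n > 0`:
    (hd0 : d = 0 → ∃ n : ℤ, 0 < n ∧ ∃ x : A n, x ≠ 0) :
    ∀ (n : ℤ) (x : A n), h n x = 0 := by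
  have one_ne : one ≠ 0 := by
    intro h0
    have := @hdim.1 0 1 (by simp [h0])
    exact zero_ne_one this
  have actL : ∀ (n : ℤ) (x : A n), gtAct K A mul n 0
      (DirectSum.lof K (gtIdx n) (fun ij => A ij.1.1 ⊗[K] A ij.1.2)
        ⟨(n, 0), by simp⟩ (x ⊗ₜ one)) one = gcast K A (by omega) x := by
    intro n x
    rw [gtAct_lof]
    dsimp only
    rw [hmul_one, hmul_one, gcast_gcast_apply, gcast_gcast_apply]
  have actR : ∀ (n : ℤ) (x : A n), gtAct K A mul n 0
      (DirectSum.lof K (gtIdx n) (fun ij => A ij.1.1 ⊗[K] A ij.1.2)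
        ⟨(0, n), by simp⟩ (one ⊗ₜ x)) one = gcast K A (by omega) x := by
    intro n x
    rw [gtAct_lof]
    dsimp only
    rw [hone_mul, hmul_one, gcast_gcast_apply, gcast_gcast_apply]
  have h1 : h 0 one = 0 := by
    rcases hd.lt_or_eq with hlt | heq
    · exact gt_neg K A hneg _ (by omega) _
    · obtain ⟨n, hn, x, hx⟩ := hd0 heq
      obtain ⟨c, hc⟩ := gt_zero K A hneg one hdim (0 + d) (by omega) (h 0 one)
      have eL := hlin n 0 _ one |>.symm.trans (congrArg (h (n + 0)) ((actL n x).trans (actR n x).symm))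
        |>.trans (hlin n 0 _ one)
      have hs : ((-1 : K) ^ (d * n)) ≠ 0 := zpow_ne_zero _ (by simp)
      have eL2 := gcast_inj K (gt K A) _ (smul_right_injective _ hs eL)
      rw [hc, map_smul, map_smul, gtMul_lof, gtMul_lof] at eL2
      have e3 := congrArg (fun z : gt K A (n + (0 + d)) =>
        z ⟨(n + 0, 0 + 0), by dsimp only; omega⟩) eL2
      by_cases hc0 : c = 0
      · rw [hc, hc0, zero_smul]
      · exfalso
        have e4 := smul_right_injective _ hc0 e3
        dsimp only at e4
        rw [DirectSum.lof_apply, DirectSum.lof_eq_of, DirectSum.of_eq_of_ne _ _ _ (by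
          intro hh
          have := congrArg (fun t : gtIdx (n + (0 + d)) => t.1.1) hh
          dsimp only at this
          omega)] at e4
        simp only [zero_mul, zpow_zero, one_smul, hmul_one] at e4
        replace e4 := tmul_zero_cases K _ _ e4
        rcases e4 with e4 | e4
        · exact hx (gcast_inj K A _ (e4.trans (map_zero _).symm))
        · exact one_ne (gcast_inj K A _ (e4.trans (map_zero _).symm))
  intro n x
  have h2 := hlin n 0 (DirectSum.lof K (gtIdx n) (fun ij => A ij.1.1 ⊗[K] A ij.1.2)
        ⟨(n, 0), by simp⟩ (x ⊗ₜ one)) one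
  rw [h1, map_zero, map_zero, smul_zero, actL] at h2
  have gen : ∀ (k : ℤ) (e : n = k), h k (gcast K A e x) = 0 → h n x = 0 := by
    intro k e hk
    subst e
    exact hk
  exact gen _ _ h2
end
end
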